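/- Let n ∈ ℕ, p ∈ ℕ₀, and 0 < α < 2. Assume g ∈ C_c^N(ℝ^n) with N ≥ max(2p+4, n+1) and ∂^k g(0) = 0 for all k ∈ ℕ₀^n with |k|₁ ≤ 2p+1 (including k = 0). Then there exists a constant C > 0 such that for all 0 < h ≤ 1: | ∫_{ℝ^n} g(x) s(x) dx − T_h^0[g·s] | ≤ C h^{2p+4−α}. -/

import Mathlib

open MeasureTheory Real

noncomputable def euclNorm {n : ℕ} (x : Fin n → ℝ) : ℝ := Real.sqrt (∑ j, x j ^ 2)

noncomputable def pd {n : ℕ} (j : Fin n) (f : (Fin n → ℝ) → ℝ) : (Fin n → ℝ) → ℝ :=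
  fun x => fderiv ℝ f x (Pi.single j 1)

noncomputable def md {n : ℕ} (γ : Fin n → ℕ) (f : (Fin n → ℝ) → ℝ) : (Fin n → ℝ) → ℝ :=
  (List.finRange n).foldr (fun j g => (pd j)^[γ j] g) f

noncomputable def trap {n : ℕ} (h : ℝ) (f : (Fin n → ℝ) → ℝ) : ℝ :=
  h ^ n * ∑' β : {β : Fin n → ℤ // β ≠ 0}, f (fun j => (β.1 j : ℝ) * h)

/-!
A function whose `k`-th derivatives are bounded by a multiple of `‖x‖ ^ (b - k)` keeps its bounds
under the dilation `f ↦ h⁻ᵇ f(h ·)`, so the quadrature error with step `h` is `h ^ (n + b)` times an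
error on the unit lattice, which has to be bounded only in terms of the constants. The product `g s`
is such a function, of order `b = (2p + 2) + (2 - n - α)`: the derivatives of `g` vanish at the
origin and `s` is homogeneous.

On the unit lattice a cutoff at the origin splits off a part which no nonzero lattice point sees and
whose integral converges because `b > -n`. For the smooth remainder, integrals over the coordinates
are replaced by sums one coordinate at a time. By Poisson summation each replacement costs at most a
multiple of the integral of the `M`-th derivative, here with respect to a product of Lebesgue
measures and counting measures on `ℤ`, and this is finite because `M - b > n`.
-/

section PoissonSummation

open FourierTransform

theorem summable_int_inv_two_pi_abs_pow {M : ℕ} (hM : 2 ≤ M) :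
    Summable fun k : ℤ => ((2 * π * |(k : ℝ)|) ^ M)⁻¹ := by
  simp only [mul_pow _ |(_ : ℝ)|, mul_inv, ← inv_pow |(_ : ℝ)|]
  refine Summable.mul_left _ ((Real.summable_abs_int_rpow (b := M) (by exact_mod_cast hM)).congr ?_)
  intro k
  rw [Real.rpow_neg (abs_nonneg _), Real.rpow_natCast, inv_pow]

theorem norm_fourier_le_integral_norm_iteratedDeriv {M : ℕ} {u : ℝ → ℂ} (hu : ContDiff ℝ M u)
    (hc : HasCompactSupport u) {ξ : ℝ} (hξ : ξ ≠ 0) :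
    ‖𝓕 u ξ‖ ≤ ((2 * π * |ξ|) ^ M)⁻¹ * ∫ t, ‖iteratedDeriv M u t‖ := by
  have integrable_deriv : ∀ j : ℕ, (j : ℕ∞) ≤ M → Integrable (iteratedDeriv j u) := by
    intro j hj
    refine (hu.continuous_iteratedDeriv j (by exact_mod_cast hj)).integrable_of_hasCompactSupport ?_
    rw [iteratedDeriv_eq_equiv_comp]
    exact (hc.iteratedFDeriv (𝕜 := ℝ) j).comp_left (map_zero _)
  have fourier_deriv : ‖𝓕 (iteratedDeriv M u) ξ‖ = (2 * π * |ξ|) ^ M * ‖𝓕 u ξ‖ := by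
    rw [Real.fourier_iteratedDeriv (N := (M : ℕ∞)) hu integrable_deriv le_rfl]
    simp [abs_of_pos pi_pos]
  rw [inv_mul_eq_div, le_div_iff₀' (by positivity), ← fourier_deriv]
  exact VectorFourier.norm_fourierIntegral_le_integral_norm _ _ _ _ _

-- The zeroth Fourier coefficient of the periodization is the integral, so Poisson summation leaves
-- only the nonzero frequencies in the quadrature error.
theorem norm_integral_sub_tsum_int_le {M : ℕ} (hM : 2 ≤ M) {u : ℝ → ℂ} (hu : ContDiff ℝ M u)
    (hc : HasCompactSupport u) :
    ‖(∫ t, u t) - ∑' m : ℤ, u m‖ ≤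
      (∑' k : ℤ, ((2 * π * |(k : ℝ)|) ^ M)⁻¹) * ∫ t, ‖iteratedDeriv M u t‖ := by
  have summable_bound :=
    (summable_int_inv_two_pi_abs_pow hM).mul_right (∫ t, ‖iteratedDeriv M u t‖)
  have fourier_le (k : ℤ) (hk : k ≠ 0) :=
    norm_fourier_le_integral_norm_iteratedDeriv hu hc (Int.cast_ne_zero.2 hk)
  have summable_fourier : Summable fun k : ℤ => 𝓕 u (k : ℝ) := by
    refine .of_norm_bounded_eventually summable_bound ((Set.finite_singleton 0).subset ?_)
    exact fun k hk => by_contra fun hk0 => hk (fourier_le k hk0)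
  have decay : u =O[Filter.cocompact ℝ] fun x => |x| ^ (-2 : ℝ) := by
    refine (Asymptotics.isBigO_zero _ _).congr' ?_ .rfl
    exact ((hasCompactSupport_iff_eventuallyEq.1 hc).filter_mono
      Filter.cocompact_le_coclosedCompact).symm
  have poisson := Real.tsum_eq_tsum_fourier_of_rpow_decay_of_summable hu.continuous one_lt_two
    decay summable_fourier 0
  have fourier_zero : 𝓕 u ((0 : ℤ) : ℝ) = ∫ t, u t := by simp [Real.fourier_eq]
  simp only [zero_add, QuotientAddGroup.mk_zero, fourier_eval_zero, mul_one] at poisson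
  rw [poisson, summable_fourier.tsum_eq_add_tsum_ite 0, fourier_zero, sub_add_cancel_left,
    norm_neg, ← tsum_mul_right]
  refine tsum_of_norm_bounded summable_bound.hasSum fun k => ?_
  split_ifs with hk
  · rw [norm_zero]
    positivity
  · exact fourier_le k hk

theorem abs_integral_sub_tsum_int_le {M : ℕ} (hM : 2 ≤ M) {u : ℝ → ℝ} (hu : ContDiff ℝ M u)
    (hc : HasCompactSupport u) :
    |(∫ t, u t) - ∑' m : ℤ, u m| ≤
      (∑' k : ℤ, ((2 * π * |(k : ℝ)|) ^ M)⁻¹) * ∫ t, ‖iteratedFDeriv ℝ M u t‖ := by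
  have complex_bound := norm_integral_sub_tsum_int_le hM (Complex.ofRealCLM.contDiff.comp hu)
    (hc.comp_left Complex.ofReal_zero)
  have norm_deriv (t : ℝ) :
      ‖iteratedDeriv M (Complex.ofRealCLM ∘ u) t‖ = ‖iteratedFDeriv ℝ M u t‖ := by
    rw [← norm_iteratedFDeriv_eq_norm_iteratedDeriv]
    exact Complex.ofRealLI.norm_iteratedFDeriv_comp_left hu.contDiffAt le_rfl
  simp only [norm_deriv, Function.comp_apply, Complex.ofRealCLM_apply] at complex_bound
  rwa [integral_complex_ofReal, ← Complex.ofReal_tsum, ← Complex.ofReal_sub,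
    Complex.norm_real] at complex_bound

end PoissonSummation

section IntegerMeasure

/-- Counting measure on the integers, seen as a measure on the line. -/
noncomputable def intMeasure : Measure ℝ :=
  Measure.count.map (Int.cast : ℤ → ℝ)

instance : IsLocallyFiniteMeasure intMeasure := by
  refine ⟨fun x => ⟨Metric.closedBall x 1, Metric.closedBall_mem_nhds x one_pos, ?_⟩⟩
  have hcompact := Int.isClosedEmbedding_coe_real.isCompact_preimage (isCompact_closedBall x 1)
  rw [intMeasure, Int.isClosedEmbedding_coe_real.measurableEmbedding.map_apply]
  exact Measure.count_apply_lt_top.2 hcompact.finite_of_discrete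

theorem integral_intMeasure {u : ℝ → ℝ} (hu : Integrable u intMeasure) :
    ∫ t, u t ∂intMeasure = ∑' m : ℤ, u m := by
  have hemb := Int.isClosedEmbedding_coe_real.measurableEmbedding
  have integrable_comp : Integrable (fun m : ℤ => u m) Measure.count :=
    hemb.integrable_map_iff.1 hu
  rw [intMeasure, hemb.integral_map, integral_countable integrable_comp]
  simp [measureReal_def]

theorem integrable_intMeasure_one_add_abs_rpow {s : ℝ} (hs : 1 < s) :
    Integrable (fun t : ℝ => (1 + |t|) ^ (-s)) intMeasure := by
  rw [intMeasure, Int.isClosedEmbedding_coe_real.measurableEmbedding.integrable_map_iff,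
    integrable_count_iff]
  refine Summable.abs (.of_norm_bounded_eventually (Real.summable_abs_int_rpow hs)
    ((Set.finite_singleton 0).subset fun k hk => by_contra fun hk0 => hk ?_))
  have hk_pos : 0 < |(k : ℝ)| := abs_pos.2 (Int.cast_ne_zero.2 hk0)
  simp only [Function.comp_apply, Set.mem_ofPred_eq]
  rw [Real.norm_of_nonneg (by positivity)]
  exact Real.rpow_le_rpow_of_nonpos hk_pos (by linarith) (by linarith)

theorem pi_intMeasure {ι : Type*} [Fintype ι] :
    Measure.pi (fun _ : ι => intMeasure) =
      Measure.count.map fun (β : ι → ℤ) j => (β j : ℝ) := by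
  have pi_count : Measure.pi (fun _ : ι => (Measure.count : Measure ℤ)) = Measure.count :=
    Measure.ext_of_singleton fun β => by simp [Measure.pi_singleton]
  have : SigmaFinite (Measure.count.map (Int.cast : ℤ → ℝ)) :=
    inferInstanceAs (SigmaFinite intMeasure)
  rw [← pi_count, Measure.pi_map_pi fun _ => by fun_prop]
  rfl

theorem integral_pi_intMeasure {ι : Type*} [Fintype ι] {F : (ι → ℝ) → ℝ}
    (hF : Integrable F (Measure.pi fun _ => intMeasure)) :
    ∫ y, F y ∂(Measure.pi fun _ => intMeasure) = ∑' β : ι → ℤ, F fun j => (β j : ℝ) := by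
  have hmeas : Measurable fun (β : ι → ℤ) j => (β j : ℝ) := by fun_prop
  rw [pi_intMeasure] at hF ⊢
  have integrable_comp : Integrable (fun β : ι → ℤ => F fun j => (β j : ℝ)) Measure.count :=
    hF.comp_measurable hmeas
  rw [integral_map hmeas.aemeasurable hF.aestronglyMeasurable, integral_countable integrable_comp]
  simp [measureReal_def]

end IntegerMeasure

section OneCoordinate

variable {n : ℕ} (j : Fin (n + 1))

theorem isometry_insertNth (z : Fin n → ℝ) :
    Isometry fun t : ℝ => j.insertNth (α := fun _ => ℝ) t z :=
  Isometry.of_dist_eq fun s t => by simp [Fin.dist_insertNth_insertNth]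

theorem insertNth_eq_add_single (t : ℝ) (z : Fin n → ℝ) :
    j.insertNth (α := fun _ => ℝ) t z =
      j.insertNth (α := fun _ => ℝ) 0 z + ContinuousLinearMap.single ℝ (fun _ => ℝ) j t := by
  ext i
  refine j.succAboveCases ?_ (fun i => ?_) i <;> simp

theorem contDiff_insertNth {m : WithTop ℕ∞} (z : Fin n → ℝ) :
    ContDiff ℝ m fun t : ℝ => j.insertNth (α := fun _ => ℝ) t z := by
  rw [funext fun t => insertNth_eq_add_single j t z]
  fun_prop

theorem norm_iteratedFDeriv_comp_insertNth_le {M : ℕ} {F : (Fin (n + 1) → ℝ) → ℝ}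
    (hF : ContDiff ℝ M F) (z : Fin n → ℝ) (t : ℝ) :
    ‖iteratedFDeriv ℝ M (fun t => F (j.insertNth t z)) t‖ ≤
      ‖iteratedFDeriv ℝ M F (j.insertNth t z)‖ := by
  set ι := ContinuousLinearMap.single ℝ (fun _ : Fin (n + 1) => ℝ) j
  set c := j.insertNth (α := fun _ => ℝ) 0 z
  have translate : ContDiff ℝ M fun y => F (c + y) := by fun_prop
  have slice_eq : (fun t => F (j.insertNth t z)) = (fun y => F (c + y)) ∘ ι :=
    funext fun t => congrArg F (insertNth_eq_add_single j t z)
  rw [slice_eq, insertNth_eq_add_single j t z, ι.iteratedFDeriv_comp_right translate t le_rfl,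
    iteratedFDeriv_comp_add_left]
  refine (ContinuousMultilinearMap.norm_compContinuousLinearMap_le _ _).trans ?_
  rw [Finset.prod_const]
  exact mul_le_of_le_one_right (norm_nonneg _)
    (pow_le_one₀ (norm_nonneg _) (ContinuousLinearMap.norm_single_le_one ..))

theorem abs_integral_slice_sub_integral_intMeasure_le {M : ℕ} (hM : 2 ≤ M)
    {F : (Fin (n + 1) → ℝ) → ℝ} (hF : ContDiff ℝ M F) (hc : HasCompactSupport F) (z : Fin n → ℝ) :
    |(∫ t, F (j.insertNth t z)) - ∫ t, F (j.insertNth t z) ∂intMeasure| ≤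
      (∑' k : ℤ, ((2 * π * |(k : ℝ)|) ^ M)⁻¹) *
        ∫ t, ‖iteratedFDeriv ℝ M F (j.insertNth t z)‖ := by
  have hembed := (isometry_insertNth j z).isClosedEmbedding
  have slice_contDiff : ContDiff ℝ M fun t => F (j.insertNth t z) :=
    hF.comp (contDiff_insertNth j z)
  have slice_compact : HasCompactSupport fun t => F (j.insertNth t z) :=
    hc.comp_isClosedEmbedding hembed
  have integrable_slice_deriv : Integrable fun t => ‖iteratedFDeriv ℝ M F (j.insertNth t z)‖ :=
    ((hF.continuous_iteratedFDeriv le_rfl).comp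
      hembed.continuous).norm.integrable_of_hasCompactSupport
      ((hc.iteratedFDeriv M).comp_isClosedEmbedding hembed).norm
  rw [integral_intMeasure (slice_contDiff.continuous.integrable_of_hasCompactSupport slice_compact)]
  refine (abs_integral_sub_tsum_int_le hM slice_contDiff slice_compact).trans ?_
  refine mul_le_mul_of_nonneg_left ?_ (tsum_nonneg fun k => by positivity)
  exact integral_mono_of_nonneg (.of_forall fun _ => norm_nonneg _) integrable_slice_deriv
    (.of_forall (norm_iteratedFDeriv_comp_insertNth_le j hF z))

variable {μ : Fin (n + 1) → Measure ℝ} [∀ i, SigmaFinite (μ i)] {F : (Fin (n + 1) → ℝ) → ℝ}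

theorem integrable_prod_insertNth (hF : Integrable F (Measure.pi μ)) :
    Integrable (fun p : ℝ × (Fin n → ℝ) => F (j.insertNth p.1 p.2))
      ((μ j).prod (Measure.pi fun i => μ (j.succAbove i))) :=
  ((measurePreserving_piFinSuccAbove μ j).symm.integrable_comp_emb
    (MeasurableEquiv.measurableEmbedding _)).2 hF

theorem integral_pi_eq_integral_integral_insertNth (hF : Integrable F (Measure.pi μ)) :
    ∫ y, F y ∂(Measure.pi μ) =
      ∫ z, ∫ t, F (j.insertNth t z) ∂(μ j) ∂(Measure.pi fun i => μ (j.succAbove i)) := by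
  rw [← integral_prod_symm _ (integrable_prod_insertNth j hF)]
  exact ((measurePreserving_piFinSuccAbove μ j).symm.integral_comp' F).symm

end OneCoordinate

section GridMeasure

/-- Counting measure along the coordinates in `S` and Lebesgue measure along the others: a product
measure interpolating between Lebesgue measure on `ℝⁿ` (`S = ∅`) and counting measure on `ℤⁿ`
(`S = univ`). -/
noncomputable def gridMeasure {n : ℕ} (S : Finset (Fin n)) : Measure (Fin n → ℝ) :=
  Measure.pi fun i => if i ∈ S then intMeasure else volume

instance isLocallyFiniteMeasure_ite {p : Prop} [Decidable p] :
    IsLocallyFiniteMeasure (if p then intMeasure else volume) := by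
  split_ifs <;> infer_instance

instance {n : ℕ} (S : Finset (Fin n)) : IsLocallyFiniteMeasure (gridMeasure S) :=
  inferInstanceAs (IsLocallyFiniteMeasure (Measure.pi _))

theorem abs_integral_gridMeasure_insert_sub_le {n M : ℕ} (hM : 2 ≤ M) {S : Finset (Fin n)}
    {j : Fin n} (hj : j ∉ S) {F : (Fin n → ℝ) → ℝ} (hF : ContDiff ℝ M F)
    (hc : HasCompactSupport F) :
    |(∫ y, F y ∂gridMeasure S) - ∫ y, F y ∂gridMeasure (insert j S)| ≤
      (∑' k : ℤ, ((2 * π * |(k : ℝ)|) ^ M)⁻¹) *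
        ∫ y, ‖iteratedFDeriv ℝ M F y‖ ∂gridMeasure S := by
  obtain _ | n := n
  · exact j.elim0
  have integrable_of (T : Finset (Fin (n + 1))) : Integrable F (gridMeasure T) :=
    hF.continuous.integrable_of_hasCompactSupport hc
  have integrable_deriv : Integrable (fun y => ‖iteratedFDeriv ℝ M F y‖) (gridMeasure S) :=
    (hF.continuous_iteratedFDeriv le_rfl).norm.integrable_of_hasCompactSupport
      (hc.iteratedFDeriv M).norm
  have off_eq : (fun i : Fin n => if j.succAbove i ∈ insert j S then intMeasure else volume) =
      fun i => if j.succAbove i ∈ S then intMeasure else volume := by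
    simp [Fin.succAbove_ne]
  have int_S := integrable_prod_insertNth j (integrable_of S)
  have int_insert := integrable_prod_insertNth j (integrable_of (insert j S))
  have int_deriv := integrable_prod_insertNth j integrable_deriv
  simp only [gridMeasure] at *
  rw [integral_pi_eq_integral_integral_insertNth j (integrable_of S),
    integral_pi_eq_integral_integral_insertNth j (integrable_of (insert j S)),
    integral_pi_eq_integral_integral_insertNth j integrable_deriv]
  simp only [hj, Finset.mem_insert_self, if_true, if_false, off_eq] at *
  rw [← integral_sub int_S.integral_prod_right int_insert.integral_prod_right,
    ← integral_const_mul, ← Real.norm_eq_abs]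
  refine norm_integral_le_of_norm_le (int_deriv.integral_prod_right.const_mul _)
    (.of_forall fun z => ?_)
  exact abs_integral_slice_sub_integral_intMeasure_le j hM hF hc z

theorem abs_integral_sub_integral_gridMeasure_le {n M : ℕ} (hM : 2 ≤ M)
    {F : (Fin n → ℝ) → ℝ} (hF : ContDiff ℝ M F) (hc : HasCompactSupport F) {A : ℝ}
    (hA : ∀ S : Finset (Fin n), ∫ y, ‖iteratedFDeriv ℝ M F y‖ ∂gridMeasure S ≤ A)
    (S : Finset (Fin n)) :
    |(∫ y, F y) - ∫ y, F y ∂gridMeasure S| ≤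
      S.card * ((∑' k : ℤ, ((2 * π * |(k : ℝ)|) ^ M)⁻¹) * A) := by
  induction S using Finset.induction with
  | empty => simp [gridMeasure, volume_pi]
  | insert j S hj ih =>
    have replace_j := (abs_integral_gridMeasure_insert_sub_le hM hj hF hc).trans
      (mul_le_mul_of_nonneg_left (hA S) (tsum_nonneg fun k => by positivity))
    rw [Finset.card_insert_of_notMem hj, Nat.cast_succ, add_one_mul]
    exact (abs_sub_le _ _ _).trans (add_le_add ih replace_j)

theorem one_add_norm_rpow_neg_le_prod {ι : Type*} [Fintype ι] {r s : ℝ} (hs : 0 ≤ s)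
    (hsr : s * Fintype.card ι ≤ r) (y : ι → ℝ) : (1 + ‖y‖) ^ (-r) ≤ ∏ i, (1 + |y i|) ^ (-s) :=
  calc (1 + ‖y‖) ^ (-r)
    _ ≤ (1 + ‖y‖) ^ (-s * Fintype.card ι) :=
      Real.rpow_le_rpow_of_exponent_le (by simp) (by linarith)
    _ = ∏ _i : ι, (1 + ‖y‖) ^ (-s) := by
      rw [Real.rpow_mul_natCast (by positivity), Finset.prod_const, Finset.card_univ]
    _ ≤ ∏ i, (1 + |y i|) ^ (-s) :=
      Finset.prod_le_prod (fun _ _ => by positivity) fun i _ =>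
        Real.rpow_le_rpow_of_nonpos (by positivity)
          (add_le_add_right (norm_le_pi_norm y i) 1) (neg_nonpos.2 hs)

theorem integrable_gridMeasure_one_add_norm_rpow {n : ℕ} {r : ℝ} (hr : n < r)
    (S : Finset (Fin n)) : Integrable (fun y => (1 + ‖y‖) ^ (-r)) (gridMeasure S) := by
  obtain ⟨s, hs, hsr⟩ : ∃ s : ℝ, 1 < s ∧ s * n ≤ r := by
    refine ⟨1 + (r - n) / (n + 1),
      lt_add_of_pos_right 1 (div_pos (sub_pos.2 hr) (by positivity)), ?_⟩
    rw [add_mul, one_mul, div_mul_eq_mul_div, ← le_sub_iff_add_le', div_le_iff₀ (by positivity)]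
    linarith
  have factor (i : Fin n) : Integrable (fun t : ℝ => (1 + |t|) ^ (-s))
      (if i ∈ S then intMeasure else volume) := by
    split_ifs
    · exact integrable_intMeasure_one_add_abs_rpow hs
    · exact integrable_one_add_norm (by simpa using hs)
  refine (Integrable.fintype_prod factor).mono' ?_ (.of_forall fun y => ?_)
  · exact Measurable.aestronglyMeasurable (by fun_prop)
  · rw [Real.norm_of_nonneg (by positivity)]
    exact one_add_norm_rpow_neg_le_prod (by linarith) (by simpa using hsr) y

theorem exists_abs_integral_sub_tsum_le {n M : ℕ} (hM : 2 ≤ M) {r : ℝ} (hr : n < r) :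
    ∃ K : ℝ, 0 ≤ K ∧ ∀ (F : (Fin n → ℝ) → ℝ) (A : ℝ), ContDiff ℝ M F → HasCompactSupport F →
      (∀ y, ‖iteratedFDeriv ℝ M F y‖ ≤ A * (1 + ‖y‖) ^ (-r)) →
      |(∫ y, F y) - ∑' β : Fin n → ℤ, F fun j => (β j : ℝ)| ≤ K * A := by
  set W : ℝ := ∑ S : Finset (Fin n), ∫ y, (1 + ‖y‖) ^ (-r) ∂gridMeasure S
  set P : ℝ := ∑' k : ℤ, ((2 * π * |(k : ℝ)|) ^ M)⁻¹
  have weight_nonneg (S : Finset (Fin n)) : 0 ≤ ∫ y, (1 + ‖y‖) ^ (-r) ∂gridMeasure S :=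
    integral_nonneg fun y => by positivity
  refine ⟨n * (P * W), ?_, fun F A hF hc hA => ?_⟩
  · exact mul_nonneg n.cast_nonneg (mul_nonneg (tsum_nonneg fun k => by positivity)
      (Finset.sum_nonneg fun S _ => weight_nonneg S))
  have hA_nonneg : 0 ≤ A := by
    simpa using (norm_nonneg _).trans (hA 0)
  have grid_bound (S : Finset (Fin n)) :
      ∫ y, ‖iteratedFDeriv ℝ M F y‖ ∂gridMeasure S ≤ A * W := by
    refine (integral_mono_of_nonneg (.of_forall fun _ => norm_nonneg _)
      ((integrable_gridMeasure_one_add_norm_rpow hr S).const_mul A) (.of_forall hA)).trans ?_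
    rw [integral_const_mul]
    gcongr
    exact Finset.single_le_sum (fun S _ => weight_nonneg S) (Finset.mem_univ S)
  have lattice : ∫ y, F y ∂gridMeasure Finset.univ = ∑' β : Fin n → ℤ, F fun j => (β j : ℝ) := by
    have hint : Integrable F (gridMeasure Finset.univ) :=
      hF.continuous.integrable_of_hasCompactSupport hc
    simp only [gridMeasure, Finset.mem_univ, if_true] at hint ⊢
    exact integral_pi_intMeasure hint
  calc _ ≤ n * (P * (A * W)) := by
        simpa [lattice] using
          abs_integral_sub_integral_gridMeasure_le hM hF hc grid_bound Finset.univ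
    _ = n * (P * W) * A := by ring

end GridMeasure

section SymbolBound

open Metric Filter Topology

variable {E : Type*} [NormedAddCommGroup E] [NormedSpace ℝ E]

theorem norm_iteratedFDeriv_comp_smul {F : Type*} [NormedAddCommGroup F] [NormedSpace ℝ F] {c : ℝ}
    (hc : c ≠ 0) (f : E → F) (k : ℕ) (x : E) :
    ‖iteratedFDeriv ℝ k (fun y => f (c • y)) x‖ = |c| ^ k * ‖iteratedFDeriv ℝ k f (c • x)‖ := by
  let e : E ≃L[ℝ] E := ContinuousLinearEquiv.smulLeft (Units.mk0 c hc)
  have comp_eq : iteratedFDeriv ℝ k (f ∘ e) x =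
      (iteratedFDeriv ℝ k f (e x)).compContinuousLinearMap fun _ => (e : E →L[ℝ] E) := by
    simpa only [iteratedFDerivWithin_univ, Set.preimage_univ] using
      e.iteratedFDerivWithin_comp_right f uniqueDiffOn_univ (Set.mem_univ (e x)) k
  have smul_eq : iteratedFDeriv ℝ k (f ∘ e) x = c ^ k • iteratedFDeriv ℝ k f (c • x) := by
    ext v
    rw [comp_eq]
    exact ((iteratedFDeriv ℝ k f (c • x)).map_smul_univ (fun _ => c) v).trans (by simp)
  rw [show (fun y => f (c • y)) = f ∘ e from rfl, smul_eq, norm_smul, norm_pow, Real.norm_eq_abs]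

/-- `f` behaves near the origin and at infinity like a homogeneous function of degree `b`, to order
`M` of differentiability: `‖Dᵏ f x‖ ≤ A ‖x‖ ^ (b - k)` for `k ≤ M` and `x ≠ 0`. The constant `A` is
part of the notion because the quadrature estimates apply it to all dilates of one function. -/
structure SymbolBound (M : ℕ) (b A : ℝ) (f : E → ℝ) : Prop where
  nonneg : 0 ≤ A
  contDiffAt : ∀ x ≠ 0, ContDiffAt ℝ M f x
  norm_iteratedFDeriv_le : ∀ k ≤ M, ∀ x ≠ 0, ‖iteratedFDeriv ℝ k f x‖ ≤ A * ‖x‖ ^ (b - k)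

namespace SymbolBound

variable {M : ℕ} {a b A B : ℝ} {f g : E → ℝ}

theorem abs_le (hf : SymbolBound M b A f) {x : E} (hx : x ≠ 0) : |f x| ≤ A * ‖x‖ ^ b := by
  simpa using hf.norm_iteratedFDeriv_le 0 (Nat.zero_le M) x hx

theorem exists_of_forall_order (hf : ∀ x ≠ 0, ContDiffAt ℝ M f x)
    (hbound : ∀ k ≤ M, ∃ A : ℝ, ∀ x ≠ 0, ‖iteratedFDeriv ℝ k f x‖ ≤ A * ‖x‖ ^ (b - k)) :
    ∃ A, SymbolBound M b A f := by
  choose! A hA using hbound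
  refine ⟨∑ k ∈ Finset.range (M + 1), |A k|, Finset.sum_nonneg fun k _ => abs_nonneg _, hf,
    fun k hk x hx => (hA k hk x hx).trans ?_⟩
  gcongr
  exact (le_abs_self _).trans (Finset.single_le_sum (f := fun k => |A k|)
    (fun k _ => abs_nonneg _) (Finset.mem_range_succ_iff.2 hk))

theorem one : SymbolBound M 0 1 fun _ : E => (1 : ℝ) where
  nonneg := zero_le_one
  contDiffAt _ _ := contDiffAt_const
  norm_iteratedFDeriv_le := by
    rintro (_ | k) - x -
    · simp
    · rw [iteratedFDeriv_succ_const, Pi.zero_apply, norm_zero]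
      positivity

theorem sub (hf : SymbolBound M b A f) (hg : SymbolBound M b B g) :
    SymbolBound M b (A + B) fun x => f x - g x where
  nonneg := add_nonneg hf.nonneg hg.nonneg
  contDiffAt x hx := (hf.contDiffAt x hx).sub (hg.contDiffAt x hx)
  norm_iteratedFDeriv_le k hk x hx := by
    have hkM : (k : WithTop ℕ∞) ≤ M := by exact_mod_cast hk
    rw [fun_iteratedFDeriv_sub_apply ((hf.contDiffAt x hx).of_le hkM)
      ((hg.contDiffAt x hx).of_le hkM), add_mul]
    exact (norm_sub_le _ _).trans
      (add_le_add (hf.norm_iteratedFDeriv_le k hk x hx) (hg.norm_iteratedFDeriv_le k hk x hx))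

theorem mul (hf : SymbolBound M a A f) (hg : SymbolBound M b B g) :
    SymbolBound M (a + b) (2 ^ M * A * B) fun x => f x * g x where
  nonneg := mul_nonneg (mul_nonneg (by positivity) hf.nonneg) hg.nonneg
  contDiffAt x hx := (hf.contDiffAt x hx).mul (hg.contDiffAt x hx)
  norm_iteratedFDeriv_le k hk x hx := by
    have hA := hf.nonneg
    have hB := hg.nonneg
    have hx_pos : 0 < ‖x‖ := norm_pos_iff.2 hx
    have hx_mem : x ∈ ({0}ᶜ : Set E) := hx
    have leibniz := norm_iteratedFDerivWithin_mul_le (n := k) (N := M) (s := {0}ᶜ)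
      (fun y hy => (hf.contDiffAt y hy).contDiffWithinAt)
      (fun y hy => (hg.contDiffAt y hy).contDiffWithinAt)
      isOpen_compl_singleton.uniqueDiffOn hx_mem (by exact_mod_cast hk)
    simp only [iteratedFDerivWithin_of_isOpen _ isOpen_compl_singleton hx_mem] at leibniz
    have term_le (i : ℕ) (hi : i ∈ Finset.range (k + 1)) :
        k.choose i * ‖iteratedFDeriv ℝ i f x‖ * ‖iteratedFDeriv ℝ (k - i) g x‖ ≤
          k.choose i * (A * B * ‖x‖ ^ (a + b - k)) := by
      have hik := Finset.mem_range_succ_iff.1 hi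
      calc k.choose i * ‖iteratedFDeriv ℝ i f x‖ * ‖iteratedFDeriv ℝ (k - i) g x‖
        _ ≤ k.choose i * (A * ‖x‖ ^ (a - i)) * (B * ‖x‖ ^ (b - (k - i : ℕ))) := by
          gcongr
          · exact hf.norm_iteratedFDeriv_le i (hik.trans hk) x hx
          · exact hg.norm_iteratedFDeriv_le (k - i) ((Nat.sub_le k i).trans hk) x hx
        _ = k.choose i * (A * B * (‖x‖ ^ (a - i) * ‖x‖ ^ (b - (k - i : ℕ)))) := by ring
        _ = k.choose i * (A * B * ‖x‖ ^ (a + b - k)) := by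
          rw [← Real.rpow_add hx_pos, Nat.cast_sub hik]
          ring_nf
    calc _ ≤ _ := leibniz
      _ ≤ ∑ i ∈ Finset.range (k + 1), k.choose i * (A * B * ‖x‖ ^ (a + b - k)) :=
        Finset.sum_le_sum term_le
      _ = 2 ^ k * (A * B * ‖x‖ ^ (a + b - k)) := by
        rw [← Finset.sum_mul]
        congr 1
        exact_mod_cast Nat.sum_range_choose k
      _ ≤ 2 ^ M * (A * B * ‖x‖ ^ (a + b - k)) := by
        gcongr
        exact one_le_two
      _ = 2 ^ M * A * B * ‖x‖ ^ (a + b - k) := by ring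

theorem dilate (hf : SymbolBound M b A f) {h : ℝ} (hh : 0 < h) :
    SymbolBound M b A fun x => h ^ (-b) * f (h • x) where
  nonneg := hf.nonneg
  contDiffAt x hx :=
    contDiffAt_const.mul ((hf.contDiffAt (h • x) (smul_ne_zero hh.ne' hx)).comp x
      (contDiff_const_smul h).contDiffAt)
  norm_iteratedFDeriv_le k hk x hx := by
    have hhx : h • x ≠ 0 := smul_ne_zero hh.ne' hx
    have smooth : ContDiffAt ℝ k (fun y => f (h • y)) x :=
      ((hf.contDiffAt (h • x) hhx).of_le (by exact_mod_cast hk)).comp x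
        (contDiff_const_smul h).contDiffAt
    have comp_smul := norm_iteratedFDeriv_comp_smul hh.ne' f k x
    rw [abs_of_pos hh] at comp_smul
    calc ‖iteratedFDeriv ℝ k (fun y => h ^ (-b) * f (h • y)) x‖
      _ = h ^ (-b) * (h ^ k * ‖iteratedFDeriv ℝ k f (h • x)‖) := by
        rw [show (fun y => h ^ (-b) * f (h • y)) = h ^ (-b) • fun y => f (h • y) from rfl,
          iteratedFDeriv_const_smul_apply smooth, norm_smul, Real.norm_of_nonneg (by positivity),
          comp_smul]
      _ ≤ h ^ (-b) * (h ^ k * (A * ‖h • x‖ ^ (b - k))) := by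
        gcongr
        exact hf.norm_iteratedFDeriv_le k hk _ hhx
      _ = h ^ (-b) * h ^ (k : ℝ) * h ^ (b - k) * (A * ‖x‖ ^ (b - k)) := by
        rw [norm_smul, Real.norm_of_nonneg hh.le, Real.mul_rpow hh.le (norm_nonneg x),
          Real.rpow_natCast]
        ring
      _ = A * ‖x‖ ^ (b - k) := by
        rw [← Real.rpow_add hh, ← Real.rpow_add hh, neg_add_eq_sub]
        simp

end SymbolBound

theorem norm_iteratedFDeriv_smul_of_homogeneous {M : ℕ} {a : ℝ} {f : E → ℝ}
    (hom : ∀ c > 0, ∀ x, f (c • x) = c ^ a * f x) (hf : ∀ x ≠ 0, ContDiffAt ℝ M f x)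
    {k : ℕ} (hk : k ≤ M) {c : ℝ} (hc : 0 < c) {x : E} (hx : x ≠ 0) :
    ‖iteratedFDeriv ℝ k f (c • x)‖ = c ^ (a - k) * ‖iteratedFDeriv ℝ k f x‖ := by
  have hom_eq : (fun y => f (c • y)) = c ^ a • f := funext (hom c hc)
  have deriv_eq := norm_iteratedFDeriv_comp_smul hc.ne' f k x
  rw [hom_eq, iteratedFDeriv_const_smul_apply ((hf x hx).of_le (by exact_mod_cast hk)), norm_smul,
    Real.norm_of_nonneg (by positivity), abs_of_pos hc] at deriv_eq
  rw [Real.rpow_sub hc, Real.rpow_natCast, div_mul_eq_mul_div, deriv_eq]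
  field_simp

theorem exists_symbolBound_of_homogeneous [FiniteDimensional ℝ E] {M : ℕ} {a : ℝ} {f : E → ℝ}
    (hom : ∀ c > 0, ∀ x, f (c • x) = c ^ a * f x) (hf : ∀ x ≠ 0, ContDiffAt ℝ M f x) :
    ∃ A, SymbolBound M a A f := by
  have := FiniteDimensional.proper ℝ E
  refine SymbolBound.exists_of_forall_order hf fun k hk => ?_
  have cont : ContinuousOn (iteratedFDeriv ℝ k f) (sphere 0 1) := fun x hx =>
    ((hf x (ne_zero_of_mem_unit_sphere ⟨x, hx⟩)).continuousAt_iteratedFDeriv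
      (by exact_mod_cast hk)).continuousWithinAt
  obtain ⟨A, hA⟩ := (isCompact_sphere (0 : E) 1).exists_bound_of_continuousOn cont
  refine ⟨A, fun x hx => ?_⟩
  have hx_pos : 0 < ‖x‖ := norm_pos_iff.2 hx
  have unit_mem : ‖x‖⁻¹ • x ∈ sphere (0 : E) 1 := by
    simp [norm_smul, hx_pos.ne']
  calc ‖iteratedFDeriv ℝ k f x‖
    _ = ‖iteratedFDeriv ℝ k f (‖x‖ • ‖x‖⁻¹ • x)‖ := by rw [smul_inv_smul₀ hx_pos.ne']
    _ = ‖x‖ ^ (a - k) * ‖iteratedFDeriv ℝ k f (‖x‖⁻¹ • x)‖ :=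
      norm_iteratedFDeriv_smul_of_homogeneous hom hf hk hx_pos
        (smul_ne_zero (inv_ne_zero hx_pos.ne') hx)
    _ ≤ A * ‖x‖ ^ (a - k) := by
      rw [mul_comm]
      gcongr
      exact hA _ unit_mem

end SymbolBound

section Vanishing

variable {E F : Type*} [NormedAddCommGroup E] [NormedSpace ℝ E] [NormedAddCommGroup F]
  [NormedSpace ℝ F]

theorem norm_le_mul_norm_pow_succ {f : E → F} (hf : Differentiable ℝ f) (h0 : f 0 = 0) {C : ℝ}
    (hC : 0 ≤ C) {d : ℕ} (hfd : ∀ x, ‖fderiv ℝ f x‖ ≤ C * ‖x‖ ^ d) (x : E) :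
    ‖f x‖ ≤ C * ‖x‖ ^ (d + 1) := by
  have fderiv_le (y : E) (hy : y ∈ Metric.closedBall 0 ‖x‖) : ‖fderiv ℝ f y‖ ≤ C * ‖x‖ ^ d := by
    refine (hfd y).trans ?_
    gcongr
    exact mem_closedBall_zero_iff.1 hy
  have mean_value := (convex_closedBall (0 : E) ‖x‖).norm_image_sub_le_of_norm_fderiv_le
    (fun y _ => hf y) fderiv_le (x := 0) (y := x) (by simp) (by simp)
  simpa [h0, pow_succ, mul_assoc] using mean_value

variable {M m : ℕ}

theorem exists_norm_iteratedFDeriv_le_mul_norm_pow {g : E → F} (hg : ContDiff ℝ m g)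
    (hc : HasCompactSupport g) (h0 : ∀ k < m, iteratedFDeriv ℝ k g 0 = 0) {k d : ℕ}
    (hkd : k + d = m) :
    ∃ C : ℝ, 0 ≤ C ∧ ∀ x, ‖iteratedFDeriv ℝ k g x‖ ≤ C * ‖x‖ ^ d := by
  induction d generalizing k with
  | zero =>
    obtain rfl : k = m := by simpa using hkd
    obtain ⟨C, hC⟩ := (hg.continuous_iteratedFDeriv le_rfl).bounded_above_of_compact_support
      (hc.iteratedFDeriv k)
    exact ⟨C, (norm_nonneg _).trans (hC 0), by simpa using hC⟩
  | succ d ih =>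
    have hk : k < m := by lia
    obtain ⟨C, hC_nonneg, hC⟩ := ih (k := k + 1) (by lia)
    refine ⟨C, hC_nonneg, norm_le_mul_norm_pow_succ
      (hg.differentiable_iteratedFDeriv (by exact_mod_cast hk)) (h0 k hk) hC_nonneg fun x => ?_⟩
    rw [norm_fderiv_iteratedFDeriv]
    exact hC x

theorem exists_symbolBound_of_iteratedFDeriv_eq_zero (hmM : m ≤ M) {g : E → ℝ}
    (hg : ContDiff ℝ M g) (hc : HasCompactSupport g) (h0 : ∀ k < m, iteratedFDeriv ℝ k g 0 = 0) :
    ∃ A, SymbolBound M m A g := by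
  refine SymbolBound.exists_of_forall_order (fun x _ => hg.contDiffAt) fun k hk => ?_
  obtain hkm | hmk := le_total k m
  · obtain ⟨C, -, hC⟩ := exists_norm_iteratedFDeriv_le_mul_norm_pow
      (hg.of_le (by exact_mod_cast hmM)) hc h0 (Nat.add_sub_of_le hkm)
    refine ⟨C, fun x _ => ?_⟩
    rw [← Nat.cast_sub hkm, Real.rpow_natCast]
    exact hC x
  · have weighted_cont : Continuous fun x => ‖iteratedFDeriv ℝ k g x‖ * ‖x‖ ^ (k - m) := by
      have := hg.continuous_iteratedFDeriv (m := k) (by exact_mod_cast hk)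
      fun_prop
    obtain ⟨C, hC⟩ := weighted_cont.bounded_above_of_compact_support
      (hc.iteratedFDeriv (𝕜 := ℝ) k).norm.mul_right
    refine ⟨C, fun x hx => ?_⟩
    rw [← neg_sub, ← Nat.cast_sub hmk, Real.rpow_neg (norm_nonneg x), Real.rpow_natCast,
      ← div_eq_mul_inv, le_div_iff₀ (pow_pos (norm_pos_iff.2 hx) _)]
    exact (le_abs_self _).trans (hC x)

end Vanishing

section Cutoff

open Metric Filter Topology

variable {E : Type*} [NormedAddCommGroup E] [NormedSpace ℝ E] {M : ℕ} {b A : ℝ} {f : E → ℝ}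

namespace SymbolBound

theorem aestronglyMeasurable [MeasurableSpace E] [BorelSpace E] {μ : Measure E}
    [NullSingletonClass μ] (hf : SymbolBound M b A f) : AEStronglyMeasurable f μ := by
  have cont : ContinuousOn f {0}ᶜ := fun x hx =>
    (hf.contDiffAt x hx).continuousAt.continuousWithinAt
  rw [← restrict_compl_singleton (μ := μ) (0 : E)]
  exact cont.aestronglyMeasurable (measurableSet_singleton _).compl

theorem contDiff_of_eqOn_ball (hf : SymbolBound M b A f) {ρ : ℝ} (hρ : 0 < ρ)
    (h0 : ∀ x ∈ ball 0 ρ, f x = 0) : ContDiff ℝ M f := by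
  refine contDiff_iff_contDiffAt.2 fun x => ?_
  obtain rfl | hx := eq_or_ne x 0
  · exact contDiffAt_const.congr_of_eventuallyEq (eventually_of_mem (ball_mem_nhds 0 hρ) h0)
  · exact hf.contDiffAt x hx

theorem norm_iteratedFDeriv_le_one_add_norm_rpow (hf : SymbolBound M b A f) {ρ : ℝ} (hρ : 0 < ρ)
    (h0 : ∀ x ∈ ball 0 ρ, f x = 0) (hbM : b ≤ M) (x : E) :
    ‖iteratedFDeriv ℝ M f x‖ ≤ (1 + ρ⁻¹) ^ (M - b) * A * (1 + ‖x‖) ^ (-(M - b)) := by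
  have hA := hf.nonneg
  obtain hx | hx := lt_or_ge ‖x‖ ρ
  · have eventually_zero : f =ᶠ[𝓝 x] fun _ => 0 :=
      Filter.eventuallyEq_of_mem (isOpen_ball.mem_nhds (mem_ball_zero_iff.2 hx)) h0
    rw [(eventually_zero.iteratedFDeriv ℝ M).eq_of_nhds, iteratedFDeriv_fun_zero, Pi.zero_apply,
      norm_zero]
    positivity
  · have hx_pos : 0 < ‖x‖ := hρ.trans_le hx
    have one_add_le : (1 + ρ⁻¹)⁻¹ * (1 + ‖x‖) ≤ ‖x‖ := by
      rw [inv_mul_le_iff₀ (by positivity), one_add_mul, add_comm, add_le_add_iff_left,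
        inv_mul_eq_div, one_le_div hρ]
      exact hx
    calc ‖iteratedFDeriv ℝ M f x‖
      _ ≤ A * ‖x‖ ^ (-(M - b)) := by
        rw [neg_sub]
        exact hf.norm_iteratedFDeriv_le M le_rfl x (norm_pos_iff.1 hx_pos)
      _ ≤ A * ((1 + ρ⁻¹)⁻¹ * (1 + ‖x‖)) ^ (-(M - b)) := by
        gcongr ?_ * ?_
        exact Real.rpow_le_rpow_of_nonpos (by positivity) one_add_le (by linarith)
      _ = (1 + ρ⁻¹) ^ (M - b) * A * (1 + ‖x‖) ^ (-(M - b)) := by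
        rw [Real.mul_rpow (by positivity) (by positivity), Real.inv_rpow (by positivity),
          ← Real.rpow_neg (by positivity), neg_neg]
        ring

end SymbolBound

variable [FiniteDimensional ℝ E]

variable (E) in
/-- Smooth cutoff equal to `1` near the origin and supported away from the nonzero points of the
unit lattice, so that multiplying by `1 - cutoff` removes the singularity without changing any
nonzero lattice sample. -/
noncomputable def cutoff : ContDiffBump (0 : E) :=
  ⟨1 / 4, 1 / 2, by norm_num, by norm_num⟩

theorem exists_symbolBound_cutoff (M : ℕ) : ∃ B, SymbolBound M 0 B (cutoff E) := by
  simpa using exists_symbolBound_of_iteratedFDeriv_eq_zero (M := M) M.zero_le (cutoff E).contDiff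
    (cutoff E).hasCompactSupport (by simp)

theorem exists_symbolBound_one_sub_cutoff_mul (M : ℕ) (b : ℝ) :
    ∃ B : ℝ, 0 ≤ B ∧ ∀ (A : ℝ) (f : E → ℝ), SymbolBound M b A f →
      SymbolBound M b (B * A) fun x => (1 - cutoff E x) * f x := by
  obtain ⟨B, hB⟩ := exists_symbolBound_cutoff (E := E) M
  refine ⟨2 ^ M * (1 + B), mul_nonneg (by positivity) (SymbolBound.one.sub hB).nonneg,
    fun A f hf => ?_⟩
  simpa using (SymbolBound.one.sub hB).mul hf

theorem one_sub_cutoff_mul_eq_zero {x : E} (hx : x ∈ ball 0 (1 / 4)) (f : E → ℝ) :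
    (1 - cutoff E x) * f x = 0 := by
  rw [(cutoff E).one_of_mem_closedBall (ball_subset_closedBall hx), sub_self, zero_mul]

theorem cutoff_eq_zero {x : E} (hx : 1 / 2 ≤ ‖x‖) : cutoff E x = 0 :=
  (cutoff E).zero_of_le_dist (by simpa [cutoff] using hx)

theorem norm_cutoff_mul_le_indicator (hf : SymbolBound M b A f) {x : E} (hx : x ≠ 0) :
    ‖cutoff E x * f x‖ ≤ (ball 0 1).indicator (fun y => A * ‖y‖ ^ b) x := by
  by_cases hx1 : x ∈ ball (0 : E) 1
  · rw [Set.indicator_of_mem hx1, norm_mul, Real.norm_of_nonneg (cutoff E).nonneg]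
    exact (mul_le_of_le_one_left (norm_nonneg _) (cutoff E).le_one).trans (hf.abs_le hx)
  · rw [mem_ball_zero_iff, not_lt] at hx1
    rw [cutoff_eq_zero (by linarith), zero_mul, norm_zero]
    exact Set.indicator_nonneg (fun y _ => mul_nonneg hf.nonneg (by positivity)) x

variable [MeasurableSpace E] [BorelSpace E] [Nontrivial E] {μ : Measure E}
  [μ.IsAddHaarMeasure]

theorem integrableOn_ball_norm_rpow (hb : -Module.finrank ℝ E < b) (r : ℝ) :
    IntegrableOn (fun x : E => ‖x‖ ^ b) (ball 0 r) μ :=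
  integrableOn_ball_of_norm_le_rpow Module.finrank_pos (C := 1) (neg_lt.1 hb)
    (.of_forall fun x => by simp [abs_of_nonneg (Real.rpow_nonneg (norm_nonneg x) b)])
    (Measurable.aestronglyMeasurable (by fun_prop))

theorem integrable_indicator_ball_mul_norm_rpow (hb : -Module.finrank ℝ E < b) (A : ℝ) :
    Integrable ((ball (0 : E) 1).indicator fun y => A * ‖y‖ ^ b) μ :=
  (integrable_indicator_iff measurableSet_ball).2 ((integrableOn_ball_norm_rpow hb 1).const_mul A)

theorem integrable_cutoff_mul (hb : -Module.finrank ℝ E < b) (hf : SymbolBound M b A f) :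
    Integrable (fun x => cutoff E x * f x) μ :=
  (integrable_indicator_ball_mul_norm_rpow hb A).mono'
    ((cutoff E).continuous.aestronglyMeasurable.mul hf.aestronglyMeasurable)
    ((Measure.ae_ne μ 0).mono fun _ hx => norm_cutoff_mul_le_indicator hf hx)

theorem abs_integral_cutoff_mul_le (hb : -Module.finrank ℝ E < b) (hf : SymbolBound M b A f) :
    |∫ x, cutoff E x * f x ∂μ| ≤ A * ∫ x in ball (0 : E) 1, ‖x‖ ^ b ∂μ :=
  calc |∫ x, cutoff E x * f x ∂μ|
    _ ≤ ∫ x, (ball 0 1).indicator (fun y => A * ‖y‖ ^ b) x ∂μ :=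
      norm_integral_le_of_norm_le (integrable_indicator_ball_mul_norm_rpow hb A)
        ((Measure.ae_ne μ 0).mono fun _ hx => norm_cutoff_mul_le_indicator hf hx)
    _ = A * ∫ x in ball (0 : E) 1, ‖x‖ ^ b ∂μ := by
      rw [integral_indicator measurableSet_ball, integral_const_mul]

end Cutoff

section PuncturedTrapezoidal

variable {n M : ℕ} {b : ℝ}

theorem one_le_norm_intCast {ι : Type*} [Fintype ι] {β : ι → ℤ} (hβ : β ≠ 0) :
    1 ≤ ‖fun j => (β j : ℝ)‖ := by
  obtain ⟨j, hj⟩ := Function.ne_iff.1 hβ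
  calc (1 : ℝ)
    _ ≤ |(β j : ℝ)| := by exact_mod_cast Int.one_le_abs hj
    _ ≤ ‖fun j => (β j : ℝ)‖ := norm_le_pi_norm (fun j => (β j : ℝ)) j

theorem tsum_one_sub_cutoff_mul (f : (Fin n → ℝ) → ℝ) :
    ∑' β : Fin n → ℤ, (1 - cutoff (Fin n → ℝ) fun j => (β j : ℝ)) * f (fun j => (β j : ℝ)) =
      ∑' β : {β : Fin n → ℤ // β ≠ 0}, f fun j => (β.1 j : ℝ) := by
  have support_subset : (Function.support fun β : Fin n → ℤ =>
      (1 - cutoff (Fin n → ℝ) fun j => (β j : ℝ)) * f fun j => (β j : ℝ)) ⊆ {β | β ≠ 0} := by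
    rintro β hβ rfl
    exact hβ (one_sub_cutoff_mul_eq_zero (by simp [← Pi.zero_def]) f)
  rw [← tsum_subtype_eq_of_support_subset support_subset]
  refine tsum_congr fun β => ?_
  rw [cutoff_eq_zero (by linarith [one_le_norm_intCast β.2]), sub_zero, one_mul]

theorem exists_abs_integral_sub_tsum_ne_zero_le [NeZero n] (hM : 2 ≤ M) (hb : -n < b)
    (hbM : n + b < M) :
    ∃ C : ℝ, 0 ≤ C ∧ ∀ (A : ℝ) (f : (Fin n → ℝ) → ℝ), SymbolBound M b A f → HasCompactSupport f →
      |(∫ x, f x) - ∑' β : {β : Fin n → ℤ // β ≠ 0}, f fun j => (β.1 j : ℝ)| ≤ C * A := by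
  obtain ⟨K, hK, poisson⟩ := exists_abs_integral_sub_tsum_le hM (lt_sub_iff_add_lt.2 hbM)
  obtain ⟨B, hB, far_symbol⟩ := exists_symbolBound_one_sub_cutoff_mul (E := Fin n → ℝ) M b
  have hb_le : b ≤ M := by linarith [n.cast_nonneg (α := ℝ)]
  have hb_finrank : -(Module.finrank ℝ (Fin n → ℝ) : ℝ) < b := by simpa using hb
  set I : ℝ := ∫ x in Metric.ball (0 : Fin n → ℝ) 1, ‖x‖ ^ b
  have : 0 ≤ I := integral_nonneg fun x => by positivity
  refine ⟨I + K * ((1 + (1 / 4)⁻¹) ^ (M - b) * B), by positivity, fun A f hf hc => ?_⟩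
  have far := far_symbol A f hf
  have far_zero (x : Fin n → ℝ) (hx : x ∈ Metric.ball 0 (1 / 4)) :=
    one_sub_cutoff_mul_eq_zero hx f
  have far_smooth := far.contDiff_of_eqOn_ball (by norm_num) far_zero
  have far_compact : HasCompactSupport fun x => (1 - cutoff (Fin n → ℝ) x) * f x := hc.mul_left
  have split : ∫ x, f x = (∫ x, cutoff (Fin n → ℝ) x * f x) +
      ∫ x, (1 - cutoff (Fin n → ℝ) x) * f x := by
    rw [← integral_add (integrable_cutoff_mul hb_finrank hf)
      (far_smooth.continuous.integrable_of_hasCompactSupport far_compact)]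
    exact integral_congr_ae (.of_forall fun x => by ring)
  have far_le := poisson _ _ far_smooth far_compact
    (far.norm_iteratedFDeriv_le_one_add_norm_rpow (by norm_num) far_zero hb_le)
  have near_le := abs_integral_cutoff_mul_le (μ := volume) hb_finrank hf
  rw [tsum_one_sub_cutoff_mul f] at far_le
  rw [split, add_sub_assoc]
  refine (abs_add_le _ _).trans ((add_le_add near_le far_le).trans_eq ?_)
  ring

theorem integral_sub_trap_eq_dilate {h : ℝ} (hh : 0 < h) (b : ℝ) (f : (Fin n → ℝ) → ℝ) :
    (∫ x, f x) - trap h f = h ^ (n + b) * ((∫ x, h ^ (-b) * f (h • x)) -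
      ∑' β : {β : Fin n → ℤ // β ≠ 0}, h ^ (-b) * f (h • fun j => (β.1 j : ℝ))) := by
  have smul_eq (β : {β : Fin n → ℤ // β ≠ 0}) :
      (h • fun j => (β.1 j : ℝ)) = fun j => (β.1 j : ℝ) * h := by
    ext j
    simp [mul_comm]
  have integral_dilate : ∫ x, f x = h ^ n * ∫ x, f (h • x) := by
    rw [Measure.integral_comp_smul_of_nonneg _ _ _ (hR := hh.le), Module.finrank_fin_fun,
      smul_eq_mul, mul_inv_cancel_left₀ (by positivity)]
  have hpow : h ^ (n + b) * h ^ (-b) = h ^ n := by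
    rw [← Real.rpow_add hh, add_neg_cancel_right, Real.rpow_natCast]
  simp only [smul_eq, integral_const_mul, tsum_mul_left]
  rw [← mul_sub, ← mul_assoc, hpow, mul_sub, integral_dilate, trap]

theorem exists_abs_integral_sub_trap_le [NeZero n] (hM : 2 ≤ M) (hb : -n < b)
    (hbM : n + b < M) {A : ℝ} {f : (Fin n → ℝ) → ℝ} (hf : SymbolBound M b A f)
    (hc : HasCompactSupport f) :
    ∃ C > 0, ∀ h > 0, |(∫ x, f x) - trap h f| ≤ C * h ^ (n + b) := by
  obtain ⟨C, hC, unit_lattice⟩ := exists_abs_integral_sub_tsum_ne_zero_le hM hb hbM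
  have hA := hf.nonneg
  refine ⟨C * A + 1, by positivity, fun h hh => ?_⟩
  have dilate_compact : HasCompactSupport fun x => h ^ (-b) * f (h • x) :=
    (hc.comp_smul hh.ne').mul_left
  rw [integral_sub_trap_eq_dilate hh b f, abs_mul, abs_of_pos (Real.rpow_pos_of_pos hh _), mul_comm]
  gcongr
  exact (unit_lattice A _ (hf.dilate hh) dilate_compact).trans (lt_add_one _).le

end PuncturedTrapezoidal

section MixedDerivatives

variable {n m : ℕ} {f : (Fin n → ℝ) → ℝ}

theorem contDiff_pd (hf : ContDiff ℝ (m + 1 : ℕ) f) (j : Fin n) : ContDiff ℝ m (pd j f) :=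
  (hf.fderiv_right (by norm_cast)).clm_apply contDiff_const

theorem pd_pd_eq_fderiv_fderiv (hf : ContDiff ℝ 2 f) (i j : Fin n) (x : Fin n → ℝ) :
    pd i (pd j f) x = fderiv ℝ (fderiv ℝ f) x (Pi.single i 1) (Pi.single j 1) := by
  have diff : DifferentiableAt ℝ (fderiv ℝ f) x :=
    (hf.fderiv_right (m := 1) (by norm_cast)).differentiable one_ne_zero x
  change fderiv ℝ (fun y => fderiv ℝ f y (Pi.single j 1)) x (Pi.single i 1) = _
  rw [fderiv_clm_apply diff (differentiableAt_const _)]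
  simp

theorem pd_comm (hf : ContDiff ℝ 2 f) (i j : Fin n) : pd i (pd j f) = pd j (pd i f) := by
  ext x
  have symm : IsSymmSndFDerivAt ℝ f x := hf.contDiffAt.isSymmSndFDerivAt (by simp)
  rw [pd_pd_eq_fderiv_fderiv hf, pd_pd_eq_fderiv_fderiv hf]
  exact symm _ _

theorem contDiff_foldr_pd (hf : ContDiff ℝ m f) {l : List (Fin n)} {k : ℕ}
    (h : l.length + k ≤ m) : ContDiff ℝ k (l.foldr pd f) := by
  induction l generalizing k with
  | nil => exact hf.of_le (by simpa using h)
  | cons j l ih =>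
    rw [List.length_cons] at h
    exact contDiff_pd (ih (by lia)) j

theorem foldr_pd_eq_of_perm (hf : ContDiff ℝ m f) {l l' : List (Fin n)} (h : l.Perm l')
    (hl : l.length ≤ m) : l.foldr pd f = l'.foldr pd f := by
  induction h with
  | nil => rfl
  | cons j _ ih =>
    rw [List.length_cons] at hl
    rw [List.foldr_cons, List.foldr_cons, ih (by lia)]
  | swap i j l => exact pd_comm (contDiff_foldr_pd hf hl) j i
  | trans h _ ih ih' => exact (ih hl).trans (ih' (h.length_eq ▸ hl))

theorem md_eq_foldr_pd (γ : Fin n → ℕ) (f : (Fin n → ℝ) → ℝ) :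
    md γ f = ((List.finRange n).flatMap fun j => List.replicate (γ j) j).foldr pd f := by
  have iterate_eq (j : Fin n) (f : (Fin n → ℝ) → ℝ) (k : ℕ) :
      (pd j)^[k] f = (List.replicate k j).foldr pd f := by
    induction k with
    | zero => rfl
    | succ k ih => rw [Function.iterate_succ_apply', List.replicate_succ, List.foldr_cons, ih]
  simp only [md, iterate_eq, List.foldr_flatMap]

theorem perm_flatMap_replicate_count (l : List (Fin n)) :
    l.Perm ((List.finRange n).flatMap fun j => List.replicate (l.count j) j) := by
  refine List.perm_iff_count.2 fun i => ?_
  have count_eq : (List.count i ∘ fun j => List.replicate (l.count j) j) =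
      fun j => if j = i then l.count i else 0 := by
    ext j
    obtain rfl | hji := eq_or_ne j i
    · simp
    · simp [List.count_replicate, hji]
  rw [List.count_flatMap, count_eq, ← List.ofFn_eq_map, List.sum_ofFn]
  simp

theorem sum_count_eq_length {ι : Type*} [Fintype ι] [DecidableEq ι] (l : List ι) :
    ∑ j, l.count j = l.length := by
  rw [← List.sum_toFinset_count_eq_length]
  refine (Finset.sum_subset (Finset.subset_univ _) fun j _ hj => ?_).symm
  simpa [List.count_eq_zero] using hj

theorem foldr_pd_eq_md_count (hf : ContDiff ℝ m f) {l : List (Fin n)} (hl : l.length ≤ m) :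
    l.foldr pd f = md (fun j => l.count j) f := by
  rw [md_eq_foldr_pd]
  exact foldr_pd_eq_of_perm hf (perm_flatMap_replicate_count l) hl

theorem iteratedFDeriv_apply_single {k : ℕ} (hf : ContDiff ℝ k f) (i : Fin k → Fin n)
    (x : Fin n → ℝ) :
    iteratedFDeriv ℝ k f x (fun a => Pi.single (i a) 1) = (List.ofFn i).foldr pd f x := by
  induction k generalizing x with
  | zero => simp
  | succ k ih =>
    have diff : DifferentiableAt ℝ (iteratedFDeriv ℝ k f) x :=
      hf.differentiable_iteratedFDeriv (by exact_mod_cast k.lt_succ_self) x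
    have tail_eq : (List.ofFn fun a => i a.succ).foldr pd f =
        fun y => iteratedFDeriv ℝ k f y (fun a => Pi.single (i a.succ) 1) :=
      funext fun y => (ih (hf.of_le (by exact_mod_cast k.le_succ)) _ y).symm
    rw [List.ofFn_succ, List.foldr_cons, tail_eq, pd,
      fderiv_continuousMultilinear_apply_const_apply diff, iteratedFDeriv_succ_apply_left]
    rfl

theorem iteratedFDeriv_eq_zero_of_md_eq_zero {x : Fin n → ℝ} (hf : ContDiff ℝ m f)
    (h0 : ∀ γ : Fin n → ℕ, ∑ j, γ j = m → md γ f x = 0) : iteratedFDeriv ℝ m f x = 0 := by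
  apply ContinuousMultilinearMap.toMultilinearMap_injective
  refine Module.Basis.ext_multilinear (fun _ => Pi.basisFun ℝ (Fin n)) fun i => ?_
  have deriv_single := iteratedFDeriv_apply_single hf i x
  rw [foldr_pd_eq_md_count hf (List.length_ofFn).le,
    h0 _ ((sum_count_eq_length _).trans List.length_ofFn)] at deriv_single
  simpa using deriv_single

end MixedDerivatives

section Kernel

variable {n : ℕ}

theorem euclNorm_nonneg (x : Fin n → ℝ) : 0 ≤ euclNorm x :=
  Real.sqrt_nonneg _

theorem euclNorm_smul {c : ℝ} (hc : 0 ≤ c) (x : Fin n → ℝ) : euclNorm (c • x) = c * euclNorm x := by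
  simp only [euclNorm, Pi.smul_apply, smul_eq_mul, mul_pow]
  rw [← Finset.mul_sum, Real.sqrt_mul (sq_nonneg c), Real.sqrt_sq hc]

theorem sum_sq_pos {ι : Type*} [Fintype ι] {x : ι → ℝ} (hx : x ≠ 0) : 0 < ∑ j, x j ^ 2 := by
  obtain ⟨j, hj⟩ := Function.ne_iff.1 hx
  exact Finset.sum_pos' (fun i _ => sq_nonneg (x i)) ⟨j, Finset.mem_univ j, sq_pos_iff.2 hj⟩

theorem contDiffAt_euclNorm {m : WithTop ℕ∞} {x : Fin n → ℝ} (hx : x ≠ 0) :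
    ContDiffAt ℝ m euclNorm x :=
  ContDiffAt.sqrt (by fun_prop) (sum_sq_pos hx).ne'

theorem exists_symbolBound_sq_div_euclNorm_rpow (M : ℕ) (i : Fin n) (s : ℝ) :
    ∃ A, SymbolBound M (2 - s) A fun x : Fin n → ℝ => x i ^ 2 / euclNorm x ^ s := by
  refine exists_symbolBound_of_homogeneous (fun c hc x => ?_) fun x hx => ?_
  · rw [euclNorm_smul hc.le, Real.mul_rpow hc.le (euclNorm_nonneg x), Real.rpow_sub hc,
      Real.rpow_two, Pi.smul_apply, smul_eq_mul, mul_pow, mul_div_mul_comm]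
  · have hpos : 0 < euclNorm x := Real.sqrt_pos.2 (sum_sq_pos hx)
    exact ContDiffAt.div (by fun_prop) ((contDiffAt_euclNorm hx).rpow_const_of_ne hpos.ne')
      (Real.rpow_pos_of_pos hpos s).ne'

end Kernel

theorem on_diagonal_punctured_trapezoidal_order_general {n m M : ℕ} (i : Fin n) {α : ℝ}
    (hM : 2 ≤ M) (hmM : m ≤ M) (hα : α < m + 2) (hMα : m + 2 - α < M) {g : (Fin n → ℝ) → ℝ}
    (hg : ContDiff ℝ M g) (hc : HasCompactSupport g)
    (h0 : ∀ γ : Fin n → ℕ, ∑ j, γ j < m → md γ g 0 = 0) :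
    ∃ C > 0, ∀ h > 0, |(∫ x, g x * (x i ^ 2 / euclNorm x ^ (n + α))) -
      trap h (fun x => g x * (x i ^ 2 / euclNorm x ^ (n + α)))| ≤ C * h ^ (m + 2 - α) := by
  have : NeZero n := ⟨i.pos.ne'⟩
  have deriv_zero (k : ℕ) (hk : k < m) : iteratedFDeriv ℝ k g 0 = 0 :=
    iteratedFDeriv_eq_zero_of_md_eq_zero (hg.of_le (by exact_mod_cast hk.le.trans hmM))
      fun γ hγ => h0 γ (hγ.trans_lt hk)
  obtain ⟨A, hA⟩ := exists_symbolBound_of_iteratedFDeriv_eq_zero hmM hg hc deriv_zero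
  obtain ⟨B, hB⟩ := exists_symbolBound_sq_div_euclNorm_rpow M i (n + α)
  have order_eq : n + (m + (2 - (n + α))) = m + 2 - α := by ring
  rw [← order_eq] at hMα ⊢
  exact exists_abs_integral_sub_trap_le hM (by linarith) hMα (hA.mul hB) hc.mul_right

/-- order of convergence of the punctured-hole trapezoidal rule for `g·s`
with the on-diagonal singular kernel, when all derivatives of `g` up to order `2p+1`
vanish at the origin. -/
theorem on_diagonal_punctured_trapezoidal_order
    (n : ℕ) (hn : 0 < n) (p : ℕ) (α : ℝ) (hα0 : 0 < α) (hα2 : α < 2)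
    (Nsm : ℕ) (hNsm : max (2 * p + 4) (n + 1) ≤ Nsm)
    (g : (Fin n → ℝ) → ℝ) (hg : ContDiff ℝ (Nsm : ℕ∞) g) (hgc : HasCompactSupport g)
    (hgd : ∀ k : Fin n → ℕ, ∑ j, k j ≤ 2 * p + 1 → md k g 0 = 0) :
    ∃ C > (0:ℝ), ∀ h : ℝ, 0 < h → h ≤ 1 →
      |(∫ x : Fin n → ℝ, g x * (x ⟨0, hn⟩ ^ 2 / euclNorm x ^ ((n : ℝ) + α))) -
          trap h (fun x => g x * (x ⟨0, hn⟩ ^ 2 / euclNorm x ^ ((n : ℝ) + α)))| ≤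
        C * h ^ (2 * (p : ℝ) + 4 - α) := by
  have smooth : ContDiff ℝ (2 * p + 4 : ℕ) g :=
    hg.of_le (WithTop.coe_le_coe.2 (Nat.cast_le.2 ((le_max_left _ _).trans hNsm)))
  have order_eq : ((2 * p + 2 : ℕ) : ℝ) + 2 - α = 2 * p + 4 - α := by
    push_cast
    ring
  obtain ⟨C, hC, bound⟩ := on_diagonal_punctured_trapezoidal_order_general ⟨0, hn⟩
    (m := 2 * p + 2) (α := α) (by lia) (by lia) (by push_cast; linarith [p.cast_nonneg (α := ℝ)])
    (by push_cast; linarith) smooth hgc fun k hk => hgd k (Nat.lt_succ_iff.1 hk)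
  exact ⟨C, hC, fun h hh _ => order_eq ▸ bound h hh⟩
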